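/- Let n ≥ 1 and let p, q ∈ M_n with pM_n ∩ qM_n ≠ ∅. Then either (1) q ∈ pM_n or p ∈ qM_n; or (2) there exist letters x, y ∈ Q_n such that v := p·x = q·y is an intersection base and, for every u ∈ pM_n ∩ qM_n and every letter z ∈ X_n, u·z ≠ v. -/

import Mathlib

namespace Malcev

/-- The alphabet `X_n`: letters `a, b, c, d` together with `A_i, B_i, C_i, D_i`
for `i` ranging over `Fin n` (so `A ⟨0, _⟩` represents `A_1`, etc.). -/
inductive Letter (n : ℕ) : Type
  | a | b | c | d
  | A (i : Fin n) | B (i : Fin n) | C (i : Fin n) | D (i : Fin n)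
  deriving DecidableEq

open FreeMonoid

/-- The defining relations `ρ_n`. -/
inductive rel (n : ℕ) : FreeMonoid (Letter n) → FreeMonoid (Letter n) → Prop
  | da (h : 0 < n) :
      rel n (of .d * of .a) (of (.A ⟨0, h⟩) * of (.C ⟨0, h⟩))
  | AD (i : ℕ) (h : i + 1 < n) :
      rel n (of (.A ⟨i, Nat.lt_of_succ_lt h⟩) * of (.D ⟨i, Nat.lt_of_succ_lt h⟩))
            (of (.A ⟨i + 1, h⟩) * of (.C ⟨i + 1, h⟩))
  | An (h : 0 < n) :
      rel n (of (.A ⟨n - 1, Nat.sub_lt h Nat.one_pos⟩) * of (.D ⟨n - 1, Nat.sub_lt h Nat.one_pos⟩))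
            (of .d * of .b)
  | cb (h : 0 < n) :
      rel n (of .c * of .b)
            (of (.B ⟨n - 1, Nat.sub_lt h Nat.one_pos⟩) * of (.D ⟨n - 1, Nat.sub_lt h Nat.one_pos⟩))
  | BC (i : ℕ) (h : i + 1 < n) :
      rel n (of (.B ⟨i + 1, h⟩) * of (.C ⟨i + 1, h⟩))
            (of (.B ⟨i, Nat.lt_of_succ_lt h⟩) * of (.D ⟨i, Nat.lt_of_succ_lt h⟩))

/-- The congruence on the free monoid generated by `ρ_n`. -/
def Mcon (n : ℕ) : Con (FreeMonoid (Letter n)) := conGen (rel n)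

/-- The presented monoid `M_n = Mon⟨X_n | ρ_n⟩`. -/
abbrev Mn (n : ℕ) : Type := (Mcon n).Quotient

/-- The quotient (natural) map `X_n* → M_n`. -/
def mk (n : ℕ) : FreeMonoid (Letter n) →* Mn n := (Mcon n).mk'

/-- The image in `M_n` of a single letter. -/
def gen {n : ℕ} (x : Letter n) : Mn n := mk n (of x)

/-- The image in `M_n` of a word (given as a list of letters). -/
def word {n : ℕ} (w : List (Letter n)) : Mn n := mk n (ofList w)

/-- The set `P_n = {c, d, A_1, …, A_n, B_1, …, B_n}`. -/
def inP {n : ℕ} : Letter n → Prop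
  | .c => True | .d => True | .A _ => True | .B _ => True | _ => False

/-- The set `Q_n = {a, b, C_1, …, C_n, D_1, …, D_n}`. -/
def inQ {n : ℕ} : Letter n → Prop
  | .a => True | .b => True | .C _ => True | .D _ => True | _ => False

/-- `inR x y` means the two-letter word `xy` belongs to
`R_n = {db, A_1C_1, …, A_nC_n, B_1D_1, …, B_nD_n}`. -/
def inR {n : ℕ} : Letter n → Letter n → Prop
  | .d, .b => True
  | .A i, .C j => i = j
  | .B i, .D j => i = j
  | _, _ => False

/-- `inL x y` means the two-letter word `xy` belongs to
`L_n = {cb, da, A_1D_1, …, A_nD_n, B_2C_2, …, B_nC_n}`. -/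
def inL {n : ℕ} : Letter n → Letter n → Prop
  | .c, .b => True
  | .d, .a => True
  | .A i, .D j => i = j
  | .B i, .C j => i = j ∧ 1 ≤ i.val
  | _, _ => False

/-- A word is in left normal form if no two consecutive letters form a word in `R_n`. -/
def LeftNormal {n : ℕ} (w : List (Letter n)) : Prop :=
  List.Chain' (fun x y => ¬ inR x y) w

/-- `v ∈ M_n` is an intersection base if some word `a_1 ⋯ a_m` (`m ≥ 2`) in left
normal form equals `v` in `M_n` and its final two letters form a word in `L_n`. -/
def IsIntersectionBase {n : ℕ} (v : Mn n) : Prop :=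
  ∃ (w : List (Letter n)) (x y : Letter n),
    LeftNormal (w ++ [x, y]) ∧ word (w ++ [x, y]) = v ∧ inL x y

/-- The principal right ideal `pM_n`. -/
def rIdeal {n : ℕ} (p : Mn n) : Set (Mn n) := {x | ∃ m, x = p * m}

/-!
Every defining relation of `M_n` equates two-letter words `tx = sy` with `t, s ∈ P_n` and
`x, y ∈ Q_n`. As `P_n` and `Q_n` are disjoint, factors of this shape never overlap, so two words are
equal in `M_n` exactly when one arises from the other by replacing such factors independently.
Comparing the two sides of `pm = qm'` block by block, either one of `p` and `q` left divides the
other, or both end inside the same block: `p = wt` and `q = ws` with `tx = sy`. In the second case,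
if `t ≠ s`, this block takes part in a relation, so it equals a word in `L_n` and `wtx` is an
intersection base. Relations preserve length, so `u ∈ pM_n` and `uz = px` force `u = p`; if also
`u ∈ qM_n`, then `q` left divides `p`.
-/

section BlockRelation

open Relation

variable {α : Type*} {ρ : FreeMonoid α → FreeMonoid α → Prop} {P : α → Prop}

theorem conGen_of_eqvGen {M : Type*} [Mul M] {r : M → M → Prop} {a b : M} (h : EqvGen r a b) :
    conGen r a b :=
  (conGen r).toSetoid.iseqv.eqvGen_iff.1 (h.mono fun _ _ => ConGen.Rel.of _ _)

/-- A block with respect to a set `P` of letters: a two-letter word whose first letter lies in `P`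
and whose second letter does not. Distinct occurrences of blocks in a word never overlap. -/
def IsBlock (P : α → Prop) (u : FreeMonoid α) : Prop :=
  ∃ t x, P t ∧ ¬ P x ∧ u = of t * of x

/-- Defining relations of block type, each of which equates two blocks with respect to `P`. -/
def IsBlockRelation (ρ : FreeMonoid α → FreeMonoid α → Prop) (P : α → Prop) : Prop :=
  ∀ ⦃u v⦄, ρ u v → IsBlock P u ∧ IsBlock P v

/-- The relation between words that differ by independent replacements of blocks, each by a block
equivalent to it under `ρ`. For relations of block type it describes the congruence generated by
`ρ`; it lives on lists so that words can be matched letter by letter. -/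
inductive BlockEquiv (ρ : FreeMonoid α → FreeMonoid α → Prop) (P : α → Prop) :
    List α → List α → Prop
  | nil : BlockEquiv ρ P [] []
  | cons (x : α) {u v : List α} : BlockEquiv ρ P u v → BlockEquiv ρ P (x :: u) (x :: v)
  | block {t x s y : α} {u v : List α} (ht : P t) (hx : ¬ P x) (hs : P s) (hy : ¬ P y)
      (h : EqvGen ρ (of t * of x) (of s * of y)) :
      BlockEquiv ρ P u v → BlockEquiv ρ P (t :: x :: u) (s :: y :: v)

/-- The possible positions of two words that begin equivalent words: up to equivalence one is a
prefix of the other, or they have the forms `wt` and `ws`, ending inside equivalent blocks `tx` and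
`sy`. -/
def PrefixCompatible (ρ : FreeMonoid α → FreeMonoid α → Prop) (P : α → Prop) (p q : List α) :
    Prop :=
  (∃ r, BlockEquiv ρ P q (p ++ r)) ∨ (∃ r, BlockEquiv ρ P p (q ++ r)) ∨
    ∃ w t s x y, ¬ P x ∧ ¬ P y ∧ EqvGen ρ (of t * of x) (of s * of y) ∧
      BlockEquiv ρ P p (w ++ [t]) ∧ BlockEquiv ρ P q (w ++ [s])

namespace BlockEquiv

variable {u v w u' v' p q m m' : List α} {x : α}

theorem refl : ∀ u : List α, BlockEquiv ρ P u u
  | [] => nil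
  | x :: u => cons x (refl u)

theorem symm (h : BlockEquiv ρ P u v) : BlockEquiv ρ P v u := by
  induction h with
  | nil => exact nil
  | cons x _ ih => exact cons x ih
  | block ht hx hs hy h _ ih => exact block hs hy ht hx (h.symm _ _) ih

theorem exists_eq_cons (h : BlockEquiv ρ P (x :: u) v) (hx : ¬ P x) :
    ∃ w, v = x :: w ∧ BlockEquiv ρ P u w := by
  cases h with
  | cons _ h => exact ⟨_, rfl, h⟩
  | block ht => exact absurd ht hx

theorem trans (h : BlockEquiv ρ P u v) (h' : BlockEquiv ρ P v w) : BlockEquiv ρ P u w := by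
  induction h generalizing w with
  | nil => exact h'
  | cons x huv ih =>
    cases h' with
    | cons _ h' => exact cons x (ih h')
    | block ht hx hs hy e h' =>
      obtain ⟨_, rfl, -⟩ := huv.symm.exists_eq_cons hx
      obtain ⟨_, hw, huw⟩ := (ih (cons _ h')).exists_eq_cons hx
      obtain rfl := (List.cons.inj hw).2
      exact block ht hx hs hy e huw
  | block ht hx hs hy e _ ih =>
    cases h' with
    | cons _ h' =>
      obtain ⟨_, rfl, hw⟩ := h'.exists_eq_cons hy
      exact block ht hx hs hy e (ih hw)
    | block _ _ hs' hy' e' h' => exact block ht hx hs' hy' (e.trans _ _ _ e') (ih h')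

theorem append (h : BlockEquiv ρ P u v) (h' : BlockEquiv ρ P u' v') :
    BlockEquiv ρ P (u ++ u') (v ++ v') := by
  induction h with
  | nil => exact h'
  | cons x _ ih => exact cons x ih
  | block ht hx hs hy e _ ih => exact block ht hx hs hy e ih

theorem length_eq (h : BlockEquiv ρ P u v) : u.length = v.length := by
  induction h with
  | nil => rfl
  | cons _ _ ih => exact congrArg Nat.succ ih
  | block _ _ _ _ _ _ ih => exact congrArg (· + 2) ih

theorem of_conGen (hρ : IsBlockRelation ρ P) (h : conGen ρ (ofList u) (ofList v)) :
    BlockEquiv ρ P u v := by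
  let c : Con (FreeMonoid α) :=
    { r := fun u v => BlockEquiv ρ P u.toList v.toList
      iseqv := ⟨fun u => refl u.toList, symm, trans⟩
      mul' := append }
  have hc : conGen ρ ≤ c := Con.conGen_le.2 fun u v huv => by
    obtain ⟨⟨t, x, ht, hx, rfl⟩, s, y, hs, hy, rfl⟩ := hρ huv
    exact block ht hx hs hy (.rel _ _ huv) nil
  exact hc h

theorem conGen_ofList (h : BlockEquiv ρ P u v) : conGen ρ (ofList u) (ofList v) := by
  induction h with
  | nil => exact (conGen ρ).refl 1
  | cons x _ ih => exact (conGen ρ).mul ((conGen ρ).refl (of x)) ih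
  | block _ _ _ _ e _ ih => exact (conGen ρ).mul (conGen_of_eqvGen e) ih

theorem prefixCompatible_append (h : BlockEquiv ρ P u v) (hpq : PrefixCompatible ρ P p q) :
    PrefixCompatible ρ P (u ++ p) (v ++ q) := by
  rcases hpq with ⟨r, hq⟩ | ⟨r, hp⟩ | ⟨w, t, s, x, y, hx, hy, e, hp, hq⟩
  · exact .inl ⟨r, by simpa only [List.append_assoc] using h.symm.append hq⟩
  · exact .inr (.inl ⟨r, by simpa only [List.append_assoc] using h.append hp⟩)
  · refine .inr (.inr ⟨u ++ w, t, s, x, y, hx, hy, e, ?_, ?_⟩)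
    · simpa only [List.append_assoc] using (refl u).append hp
    · simpa only [List.append_assoc] using h.symm.append hq

theorem prefixCompatible (h : BlockEquiv ρ P (p ++ m) (q ++ m')) : PrefixCompatible ρ P p q := by
  generalize hu : p ++ m = u at h
  generalize hv : q ++ m' = v at h
  induction h generalizing p q with
  | nil =>
    obtain rfl := (List.append_eq_nil_iff.1 hu).1
    exact .inl ⟨q, refl q⟩
  | cons z _ ih =>
    rcases p with _ | ⟨z₁, p⟩
    · exact .inl ⟨q, refl q⟩
    rcases q with _ | ⟨z₂, q⟩
    · exact .inr (.inl ⟨z₁ :: p, refl _⟩)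
    simp only [List.cons_append, List.cons.injEq] at hu hv
    obtain ⟨rfl, hu⟩ := hu
    obtain ⟨rfl, hv⟩ := hv
    exact (refl [_]).prefixCompatible_append (ih hu hv)
  | @block t x s y _ _ ht hx hs hy e _ ih =>
    rcases p with _ | ⟨t', _ | ⟨x', p⟩⟩ <;> rcases q with _ | ⟨s', _ | ⟨y', q⟩⟩ <;>
      simp only [List.nil_append, List.cons_append, List.cons.injEq] at hu hv
    case nil.nil | nil.cons.nil | nil.cons.cons => exact .inl ⟨_, refl _⟩
    case cons.nil.nil | cons.cons.nil => exact .inr (.inl ⟨_, refl _⟩)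
    case cons.nil.cons.nil =>
      obtain ⟨rfl, -⟩ := hu
      obtain ⟨rfl, -⟩ := hv
      exact .inr (.inr ⟨[], _, _, x, y, hx, hy, e, refl _, refl _⟩)
    case cons.nil.cons.cons =>
      obtain ⟨rfl, -⟩ := hu
      obtain ⟨rfl, rfl, -⟩ := hv
      exact .inl ⟨x :: q, block hs hy ht hx (e.symm _ _) (refl q)⟩
    case cons.cons.cons.nil =>
      obtain ⟨rfl, rfl, -⟩ := hu
      obtain ⟨rfl, -⟩ := hv
      exact .inr (.inl ⟨y :: p, block ht hx hs hy e (refl p)⟩)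
    case cons.cons.cons.cons =>
      obtain ⟨rfl, rfl, hu⟩ := hu
      obtain ⟨rfl, rfl, hv⟩ := hv
      exact (block ht hx hs hy e nil).prefixCompatible_append (ih hu hv)

end BlockEquiv

theorem dvd_or_dvd_or_exists_block_of_mul_eq_mul (hρ : IsBlockRelation ρ P)
    {p q m m' : (conGen ρ).Quotient} (h : p * m = q * m') :
    p ∣ q ∨ q ∣ p ∨ ∃ (w : (conGen ρ).Quotient) (t s x y : α), ¬ P x ∧ ¬ P y ∧
      EqvGen ρ (of t * of x) (of s * of y) ∧ p = w * (of t : FreeMonoid α) ∧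
      q = w * (of s : FreeMonoid α) := by
  obtain ⟨p, rfl⟩ := Con.mk'_surjective p
  obtain ⟨q, rfl⟩ := Con.mk'_surjective q
  obtain ⟨m, rfl⟩ := Con.mk'_surjective m
  obtain ⟨m', rfl⟩ := Con.mk'_surjective m'
  rcases (BlockEquiv.of_conGen hρ ((Con.eq _).1 h)).prefixCompatible with
    ⟨r, h⟩ | ⟨r, h⟩ | ⟨w, t, s, x, y, hx, hy, e, hp, hq⟩
  · exact .inl ⟨(ofList r : FreeMonoid α), (Con.eq _).2 h.conGen_ofList⟩
  · exact .inr (.inl ⟨(ofList r : FreeMonoid α), (Con.eq _).2 h.conGen_ofList⟩)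
  · exact .inr (.inr ⟨(ofList w : FreeMonoid α), t, s, x, y, hx, hy, e,
      (Con.eq _).2 hp.conGen_ofList, (Con.eq _).2 hq.conGen_ofList⟩)

theorem eq_of_dvd_of_mul_of_eq_mul_of (hρ : IsBlockRelation ρ P) {p u : (conGen ρ).Quotient}
    {x z : α} (hpu : p ∣ u) (h : u * (of z : FreeMonoid α) = p * (of x : FreeMonoid α)) :
    u = p := by
  obtain ⟨r, rfl⟩ := hpu
  obtain ⟨p, rfl⟩ := Con.mk'_surjective p
  obtain ⟨r, rfl⟩ := Con.mk'_surjective r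
  have hlen : (p * r * of z).length = (p * of x).length :=
    (BlockEquiv.of_conGen hρ ((Con.eq _).1 h)).length_eq
  simp only [FreeMonoid.length_mul, FreeMonoid.length_of] at hlen
  obtain rfl : r = 1 := FreeMonoid.length_eq_zero.1 (by omega)
  rw [map_one, mul_one]

end BlockRelation

section NormalForm

open Relation

variable {n : ℕ}

theorem inQ_iff_not_inP {x : Letter n} : inQ x ↔ ¬ inP x := by
  cases x <;> simp [inQ, inP]

theorem inP_and_inQ_of_inL {x y : Letter n} (h : inL x y) : inP x ∧ inQ y := by
  cases x <;> cases y <;> simp_all [inL, inP, inQ]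

theorem inP_and_inQ_of_inR {x y : Letter n} (h : inR x y) : inP x ∧ inQ y := by
  cases x <;> cases y <;> simp_all [inR, inP, inQ]

theorem not_inR_of_inL {x y : Letter n} (h : inL x y) : ¬ inR x y := by
  cases x <;> cases y <;> simp_all [inL, inR]

theorem not_inR_of_inQ {x y : Letter n} (hx : inQ x) : ¬ inR x y :=
  fun h => inQ_iff_not_inP.1 hx (inP_and_inQ_of_inR h).1

theorem exists_inL_inR_of_rel {u v : FreeMonoid (Letter n)} (h : rel n u v) :
    ∃ l l' r r', inL l l' ∧ inR r r' ∧ u = of l * of l' ∧ v = of r * of r' := by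
  cases h <;> exact ⟨_, _, _, _, by simp [inL], by simp [inR], rfl, rfl⟩

theorem isBlockRelation_rel : IsBlockRelation (rel n) inP := by
  intro u v h
  obtain ⟨l, l', r, r', hl, hr, rfl, rfl⟩ := exists_inL_inR_of_rel h
  obtain ⟨hlP, hlQ⟩ := inP_and_inQ_of_inL hl
  obtain ⟨hrP, hrQ⟩ := inP_and_inQ_of_inR hr
  exact ⟨⟨l, l', hlP, inQ_iff_not_inP.1 hlQ, rfl⟩, r, r', hrP, inQ_iff_not_inP.1 hrQ, rfl⟩

theorem exists_rel_of_inR (hn : 1 ≤ n) {x y : Letter n} (h : inR x y) :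
    ∃ l l', inL l l' ∧ rel n (of l * of l') (of x * of y) := by
  cases x <;> cases y <;> simp only [inR] at h
  case d.b => exact ⟨_, _, by simp [inL], .An hn⟩
  case A.C i _ =>
    subst h
    obtain ⟨_ | i, hi⟩ := i
    · exact ⟨_, _, by simp [inL], .da hn⟩
    · exact ⟨_, _, by simp [inL], .AD i hi⟩
  case B.D i _ =>
    subst h
    by_cases hi : i.val + 1 < n
    · exact ⟨_, _, by simp [inL], .BC i hi⟩
    · obtain rfl : i = ⟨n - 1, Nat.sub_lt hn Nat.one_pos⟩ := by ext; simp only; omega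
      exact ⟨_, _, by simp [inL], .cb hn⟩

theorem eq_or_exists_inL_of_eqvGen {u v : FreeMonoid (Letter n)} (h : EqvGen (rel n) u v) :
    u = v ∨ ∃ l l', inL l l' ∧ EqvGen (rel n) u (of l * of l') := by
  induction h with
  | rel u v h =>
    obtain ⟨l, l', -, -, hl, -, rfl, -⟩ := exists_inL_inR_of_rel h
    exact .inr ⟨l, l', hl, .refl _⟩
  | refl => exact .inl rfl
  | symm u v h ih =>
    exact ih.imp Eq.symm fun ⟨l, l', hl, hu⟩ => ⟨l, l', hl, (h.symm _ _).trans _ _ _ hu⟩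
  | trans u v w _ _ ih ih' =>
    rcases ih with rfl | hu
    · exact ih'
    · exact .inr hu

theorem gen_mul_gen_eq_of_eqvGen {t x s y : Letter n}
    (h : EqvGen (rel n) (of t * of x) (of s * of y)) : gen t * gen x = gen s * gen y :=
  (Con.eq _).2 (conGen_of_eqvGen h)

theorem exists_inL_of_eqvGen_of_ne {t x s y : Letter n}
    (h : EqvGen (rel n) (of t * of x) (of s * of y)) (hts : t ≠ s) :
    ∃ l l', inL l l' ∧ gen t * gen x = gen l * gen l' := by
  have hne : of t * of x ≠ of s * of y := fun heq => hts (List.cons.inj heq).1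
  obtain ⟨l, l', hL, e⟩ := (eq_or_exists_inL_of_eqvGen h).resolve_left hne
  exact ⟨l, l', hL, gen_mul_gen_eq_of_eqvGen e⟩

theorem dvd_or_dvd_or_exists_eqvGen_of_mul_eq_mul {p q m m' : Mn n} (h : p * m = q * m') :
    p ∣ q ∨ q ∣ p ∨ ∃ (w : Mn n) (t s x y : Letter n), inQ x ∧ inQ y ∧
      EqvGen (rel n) (of t * of x) (of s * of y) ∧ p = w * gen t ∧ q = w * gen s := by
  simp only [inQ_iff_not_inP]
  exact dvd_or_dvd_or_exists_block_of_mul_eq_mul isBlockRelation_rel h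

theorem word_cons (x : Letter n) (w : List (Letter n)) : word (x :: w) = gen x * word w :=
  map_mul (mk n) (of x) (ofList w)

theorem word_append_pair (w : List (Letter n)) (x y : Letter n) :
    word (w ++ [x, y]) = word w * gen x * gen y := by
  rw [mul_assoc]
  exact map_mul (mk n) (ofList w) (of x * of y)

theorem exists_leftNormal (hn : 1 ≤ n) (w : List (Letter n)) :
    ∃ w', LeftNormal w' ∧ word w' = word w := by
  induction w with
  | nil => exact ⟨[], List.isChain_nil, rfl⟩
  | cons x w ih =>
    obtain ⟨_ | ⟨y, w'⟩, hw', heq⟩ := ih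
    · exact ⟨[x], List.isChain_singleton _, by rw [word_cons, word_cons, heq]⟩
    by_cases hR : inR x y
    · obtain ⟨l, l', hL, hrel⟩ := exists_rel_of_inR hn hR
      refine ⟨l :: l' :: w', ?_, ?_⟩
      -- The new letter `l'` lies in `Q_n`, so it starts no factor in `R_n` with what follows.
      · exact List.isChain_cons_cons.2 ⟨not_inR_of_inL hL, List.isChain_cons.2
          ⟨fun z _ => not_inR_of_inQ (inP_and_inQ_of_inL hL).2, (List.isChain_cons.1 hw').2⟩⟩
      · have hll : gen l * gen l' = gen x * gen y := gen_mul_gen_eq_of_eqvGen (.rel _ _ hrel)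
        rw [word_cons x, ← heq, word_cons, word_cons, word_cons, ← mul_assoc, hll, mul_assoc]
    · exact ⟨x :: y :: w', List.isChain_cons_cons.2 ⟨hR, hw'⟩,
        by rw [word_cons, heq, ← word_cons]⟩

theorem isIntersectionBase_mul_gen_mul_gen (hn : 1 ≤ n) (p : Mn n) {x y : Letter n}
    (h : inL x y) : IsIntersectionBase (p * gen x * gen y) := by
  obtain ⟨w, rfl⟩ := Con.mk'_surjective p
  obtain ⟨w', hw', heq⟩ := exists_leftNormal hn w.toList
  refine ⟨w', x, y, List.isChain_append.2 ⟨hw', ?_, ?_⟩, ?_, h⟩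
  · exact List.isChain_pair.2 (not_inR_of_inL h)
  · rintro z - z' hz' hR
    obtain rfl : x = z' := by simpa using hz'
    exact inQ_iff_not_inP.1 (inP_and_inQ_of_inR hR).2 (inP_and_inQ_of_inL h).1
  · rw [word_append_pair, heq]
    rfl

end NormalForm

/-- dichotomy for pairs with intersecting principal right ideals. -/
theorem Mn_cases (n : ℕ) (hn : 1 ≤ n) (p q : Mn n)
    (h : (rIdeal p ∩ rIdeal q).Nonempty) :
    (q ∈ rIdeal p ∨ p ∈ rIdeal q) ∨
    (∃ x y : Letter n, inQ x ∧ inQ y ∧ p * gen x = q * gen y ∧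
      IsIntersectionBase (p * gen x) ∧
      ∀ u ∈ rIdeal p ∩ rIdeal q, ∀ z : Letter n, u * gen z ≠ p * gen x) := by
  obtain ⟨_, ⟨m, rfl⟩, m', hm⟩ := h
  by_cases hqp : p ∈ rIdeal q
  · exact .inl (.inr hqp)
  rcases dvd_or_dvd_or_exists_eqvGen_of_mul_eq_mul hm with
    hpq | hqp' | ⟨w, t, s, x, y, hx, hy, e, rfl, rfl⟩
  · exact .inl (.inl hpq)
  · exact absurd hqp' hqp
  have hts : t ≠ s := by
    rintro rfl
    exact hqp ⟨1, (mul_one _).symm⟩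
  obtain ⟨l, l', hL, hll⟩ := exists_inL_of_eqvGen_of_ne e hts
  refine .inr ⟨x, y, hx, hy, ?_, ?_, ?_⟩
  · rw [mul_assoc, gen_mul_gen_eq_of_eqvGen e, mul_assoc]
  · rw [mul_assoc, hll, ← mul_assoc]
    exact isIntersectionBase_mul_gen_mul_gen hn w hL
  · rintro u ⟨hpu, hqu⟩ z huz
    exact hqp (eq_of_dvd_of_mul_of_eq_mul_of isBlockRelation_rel hpu huz ▸ hqu)

end Malcev
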